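/- arXiv:1706.07309 — 2 statements merged into one kernel-verified Lean document; each statement's English description precedes it below -/
import Mathlib

section
/- Let K be a field of prime characteristic p, let f ∈ K[x₁,...,x_t] be a nonzero polynomial with zero constant term, let N and e be positive integers with N/pᵉ ≤ 1. Then f^N does not belong to the ideal (x₁^{pᵉ},...,x_t^{pᵉ}) of K[x₁,...,x_t] if and only if N/pᵉ < FT(f). -/
/-!
Write `I_e = (x₁^{pᵉ},…,x_t^{pᵉ})`. This is a monomial ideal, so `g ∈ I_e` iff every monomial of
`g` has some exponent `≥ pᵉ`. The other ingredient is that, in characteristic `p`, the monomials of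
`g^q` with `q = p^d` are exactly the `q`-th powers of the monomials of `g`.

* Frobenius maps `I_e` into `I_{e+d}` (`pow_mem_span`), and since `f` has no constant term,
  `f^{pᵉ} ∈ I_e` (`pow_self_mem_span`); hence the set defining `fpt p f` is bounded above by `1`.
* If `g ∉ I_e` and `h ≠ 0` has all exponents `< p^d`, then `h * g^{p^d} ∉ I_{e+d}`
  (`mul_pow_notMem_span`): a monomial `x^{b + p^d a}` of the product with `b_i < p^d` determines
  `b` and `a` by division with remainder, so no cancellation occurs. This expresses the flatness
  of Frobenius.

If `f^N ∉ I_e`, taking `h = f`, `g = f^N` and `d` large gives `f^{N p^d + 1} ∉ I_{e+d}`, so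
`N/pᵉ < (N p^d + 1)/p^{e+d} ≤ fpt p f`. Conversely, if `N/pᵉ < fpt p f`, then `N/pᵉ < M/p^d` for
some `f^M ∉ I_d`, so `f^{M pᵉ} ∉ I_{d+e}` (the case `h = 1`), and `f^N ∈ I_e` would
give `f^{N p^d} ∈ I_{d+e}` with `N p^d < M pᵉ`, a contradiction.
-/

open MvPolynomial

/-- The F-pure threshold of `f ∈ K[x₁,…,x_t]` in characteristic `p`: the supremum in `ℝ`
of the set `{N/pᵉ : N, e positive integers with f^N ∉ (x₁^{pᵉ},…,x_t^{pᵉ})}`. -/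
noncomputable def fpt {t : ℕ} {K : Type*} [Field K] (p : ℕ) (f : MvPolynomial (Fin t) K) : ℝ :=
  sSup {r : ℝ | ∃ N e : ℕ, 0 < N ∧ 0 < e ∧
    f ^ N ∉ Ideal.span (Set.range fun i => (X i : MvPolynomial (Fin t) K) ^ p ^ e) ∧
    r = (N : ℝ) / (p : ℝ) ^ e}

lemma mem_span_X_pow {t : ℕ} {K : Type*} [Field K] (n : ℕ) (g : MvPolynomial (Fin t) K) :
    g ∈ Ideal.span (Set.range fun i => (X i : MvPolynomial (Fin t) K) ^ n) ↔
      ∀ m ∈ g.support, ∃ i, n ≤ m i := by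
  have h := @mem_ideal_span_monomial_image (Fin t) K _ g
    (Set.range fun i => Finsupp.single i n)
  rw [← Set.range_comp] at h
  simp only [Function.comp_def, ← X_pow_eq_monomial] at h
  rw [h]
  simp

lemma support_pow_char {t : ℕ} {K : Type*} [Field K] (p : ℕ) (hp : p.Prime) [CharP K p] (d : ℕ)
    (g : MvPolynomial (Fin t) K) {m : Fin t →₀ ℕ} (hm : m ∈ (g ^ p ^ d).support) :
    ∃ a ∈ g.support, m = p ^ d • a := by
  have := Fact.mk hp
  rw [← map_iterateFrobenius_expand p g d] at hm
  have := support_expand_subset g (support_map_subset _ _ hm)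
  obtain ⟨a, ha, rfl⟩ := Finset.mem_image.1 this
  exact ⟨a, ha, rfl⟩

lemma coeff_pow_char {t : ℕ} {K : Type*} [Field K] (p : ℕ) (hp : p.Prime) [CharP K p] (d : ℕ)
    (g : MvPolynomial (Fin t) K) (a : Fin t →₀ ℕ) :
    coeff (p ^ d • a) (g ^ p ^ d) = coeff a g ^ p ^ d := by
  have := Fact.mk hp
  rw [← map_iterateFrobenius_expand p g d, coeff_map,
    coeff_expand_smul _ (pow_ne_zero _ hp.ne_zero), iterateFrobenius_def]

lemma pow_mem_span {t : ℕ} {K : Type*} [Field K] (p : ℕ) (hp : p.Prime) [CharP K p] (d e : ℕ)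
    (g : MvPolynomial (Fin t) K)
    (hg : g ∈ Ideal.span (Set.range fun i => (X i : MvPolynomial (Fin t) K) ^ p ^ e)) :
    g ^ p ^ d ∈ Ideal.span (Set.range fun i => (X i : MvPolynomial (Fin t) K) ^ p ^ (e + d)) := by
  rw [mem_span_X_pow] at hg ⊢
  intro m hm
  obtain ⟨a, ha, rfl⟩ := support_pow_char p hp d g hm
  obtain ⟨i, hi⟩ := hg a ha
  refine ⟨i, ?_⟩
  rw [pow_add, mul_comm]
  simpa using Nat.mul_le_mul_left (p ^ d) hi

lemma pow_self_mem_span {t : ℕ} {K : Type*} [Field K] (p : ℕ) (hp : p.Prime) [CharP K p] (e : ℕ)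
    (f : MvPolynomial (Fin t) K) (hconst : coeff 0 f = 0) :
    f ^ p ^ e ∈ Ideal.span (Set.range fun i => (X i : MvPolynomial (Fin t) K) ^ p ^ e) := by
  have h := pow_mem_span p hp e 0 f (by
    rw [mem_span_X_pow]
    intro m hm
    by_contra! h
    have : m = 0 := by
      ext i
      simpa using h i
    rw [this, mem_support_iff] at hm
    exact hm hconst)
  simpa using h

/-- Multiplying a `p^d`-th power by a nonzero polynomial with all exponents below `p^d`
preserves non-membership in the Frobenius powers of the ideal of variables. -/
lemma mul_pow_notMem_span {t : ℕ} {K : Type*} [Field K] (p : ℕ) (hp : p.Prime) [CharP K p]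
    (d e : ℕ) (g h : MvPolynomial (Fin t) K) (hh0 : h ≠ 0)
    (hh : ∀ m ∈ h.support, ∀ i, m i < p ^ d)
    (hg : g ∉ Ideal.span (Set.range fun i => (X i : MvPolynomial (Fin t) K) ^ p ^ e)) :
    h * g ^ p ^ d ∉
      Ideal.span (Set.range fun i => (X i : MvPolynomial (Fin t) K) ^ p ^ (e + d)) := by
  classical
  rw [mem_span_X_pow] at hg ⊢
  push Not at hg ⊢
  obtain ⟨a, ha, hai⟩ := hg
  obtain ⟨b, hb⟩ := support_nonempty.2 hh0
  refine ⟨b + p ^ d • a, ?_, fun i => ?_⟩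
  · have key : coeff (b + p ^ d • a) (h * g ^ p ^ d) = coeff b h * coeff a g ^ p ^ d := by
      rw [coeff_mul, Finset.sum_eq_single (b, p ^ d • a), coeff_pow_char p hp]
      · rintro ⟨u, v⟩ huv hne
        by_contra hc
        have hu : u ∈ h.support := mem_support_iff.2 (left_ne_zero_of_mul hc)
        have hv : v ∈ (g ^ p ^ d).support := mem_support_iff.2 (right_ne_zero_of_mul hc)
        obtain ⟨a', -, rfl⟩ := support_pow_char p hp d g hv
        rw [Finset.HasAntidiagonal.mem_antidiagonal] at huv
        -- Reducing the exponents modulo `p ^ d` recovers the monomial of `h`.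
        have hub : u = b := by
          ext i
          have hi := congrArg (· % p ^ d) (DFunLike.congr_fun huv i)
          simpa [Nat.mod_eq_of_lt (hh u hu i), Nat.mod_eq_of_lt (hh b hb i)] using hi
        subst hub
        exact hne (Prod.ext rfl (add_left_cancel huv))
      · intro hn
        rw [Finset.HasAntidiagonal.mem_antidiagonal] at hn
        exact absurd rfl hn
    rw [mem_support_iff, key]
    exact mul_ne_zero (mem_support_iff.1 hb) (pow_ne_zero _ (mem_support_iff.1 ha))
  · have h1 := hh b hb i
    have h2 : p ^ d * (a i + 1) ≤ p ^ d * p ^ e := Nat.mul_le_mul_left _ (hai i)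
    simp only [Finsupp.add_apply, Finsupp.smul_apply, smul_eq_mul]
    rw [pow_add, mul_comm (p ^ e)]
    linarith

theorem stmt13 {t : ℕ} {K : Type*} [Field K] (p : ℕ) (hp : p.Prime) [CharP K p]
    (f : MvPolynomial (Fin t) K) (hf0 : f ≠ 0) (hconst : MvPolynomial.coeff 0 f = 0)
    (N e : ℕ) (hN : 0 < N) (he : 0 < e) (hle : (N : ℝ) / (p : ℝ) ^ e ≤ 1) :
    f ^ N ∉ Ideal.span (Set.range fun i => (X i : MvPolynomial (Fin t) K) ^ p ^ e) ↔
      (N : ℝ) / (p : ℝ) ^ e < fpt p f := by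
  have hpR : (0 : ℝ) < p := by exact_mod_cast hp.pos
  constructor
  · intro hnot
    obtain ⟨d, hd⟩ : ∃ d, f.totalDegree < p ^ d := ⟨_, Nat.lt_pow_self hp.one_lt⟩
    have hmem := mul_pow_notMem_span p hp d e (f ^ N) f hf0
      (fun m hm i => ((monomial_le_degreeOf i hm).trans (degreeOf_le_totalDegree f i)).trans_lt hd)
      hnot
    rw [← pow_mul, ← pow_succ'] at hmem
    have hlt : (N : ℝ) / (p : ℝ) ^ e < ((N * p ^ d + 1 : ℕ) : ℝ) / (p : ℝ) ^ (e + d) := by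
      rw [div_lt_div_iff₀ (by positivity) (by positivity), pow_add]
      push_cast
      have : (0 : ℝ) < (p : ℝ) ^ e := by positivity
      linarith
    refine hlt.trans_le (le_csSup ⟨1, ?_⟩ ⟨_, e + d, Nat.succ_pos _, by omega, hmem, rfl⟩)
    rintro _ ⟨M, c, -, -, hM, rfl⟩
    rw [div_le_one (by positivity)]
    by_contra! hcon
    have hcon' : p ^ c ≤ M := by exact_mod_cast hcon.le
    exact hM (Ideal.mem_of_dvd _ (pow_dvd_pow f hcon') (pow_self_mem_span p hp c f hconst))
  · intro hlt hmem
    have hne : {r : ℝ | ∃ N e : ℕ, 0 < N ∧ 0 < e ∧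
        f ^ N ∉ Ideal.span (Set.range fun i => (X i : MvPolynomial (Fin t) K) ^ p ^ e) ∧
        r = (N : ℝ) / (p : ℝ) ^ e}.Nonempty := by
      -- The supremum of the empty set is `0`, which is not above `N / p ^ e`.
      by_contra hemp
      rw [Set.not_nonempty_iff_eq_empty] at hemp
      rw [fpt, hemp, Real.sSup_empty] at hlt
      exact absurd hlt (not_lt.2 (by positivity))
    obtain ⟨_, ⟨M, d, -, -, hM, rfl⟩, hlt'⟩ := exists_lt_of_lt_csSup hne hlt
    rw [div_lt_div_iff₀ (by positivity) (by positivity)] at hlt'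
    have hlt'' : N * p ^ d ≤ M * p ^ e := by exact_mod_cast hlt'.le
    have h1 := mul_pow_notMem_span p hp e d (f ^ M) 1 one_ne_zero
      (fun m hm i => by
        have : m = 0 := by
          by_contra h
          exact mem_support_iff.1 hm (by rw [coeff_one, if_neg (Ne.symm h)])
        simpa [this] using pow_pos hp.pos e) hM
    have h2 := pow_mem_span p hp d e (f ^ N) hmem
    rw [one_mul, ← pow_mul, add_comm] at h1
    rw [← pow_mul] at h2
    exact h1 (Ideal.mem_of_dvd _ (pow_dvd_pow f hlt'') h2)
end

section
/- Let K be a field of characteristic 2, let a ∈ K with a ≠ 0 and a ≠ 1, and let f_a = y²z + x(x+z)(x+az) ∈ K[x,y,z]. Then the F-pure threshold of f_a equals 1/2. -/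
/-!
Write `q = 2ᵏ` and let `I n = (xⁿ, yⁿ, zⁿ)`. Expanding, `f = y²z + x³ + (a+1)x²z + axz²`, so
every monomial of `f` is divisible by the square of a variable, i.e. `f ∈ I 2`. Applying the
iterated Frobenius gives `f^q ∈ I (2q)`, hence `f^N ∈ I (2q)` for every `N ≥ q`; this bounds the
threshold above by `1/2` (`pow_mem_frobenius_power`).

Conversely, the substitution `x ↦ 0` preserves `I (2q)` and sends `f^(q-1)` to the single monomial
`y^(2q-2) z^(q-1)`, which is not in `I (2q)`. So `f^(q-1) ∉ I (2q)` (`pow_notMem`), and the ratios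
`(q-1)/(2q)` tend to `1/2`.
-/

open MvPolynomial

/-- A polynomial in `(x₁ⁿ,…,x_tⁿ)` has no monomial whose exponents are all less than `n`. -/
lemma coeff_eq_zero_of_mem_span {t : ℕ} {K : Type*} [Field K] (n : ℕ)
    {g : MvPolynomial (Fin t) K}
    (hg : g ∈ Ideal.span (Set.range fun i => (X i : MvPolynomial (Fin t) K) ^ n))
    (s : Fin t →₀ ℕ) (hs : ∀ i, s i < n) : coeff s g = 0 := by
  obtain ⟨c, rfl⟩ := (Ideal.mem_span_range_iff_exists_fun).1 hg
  rw [coeff_sum]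
  refine Finset.sum_eq_zero fun i _ => ?_
  rw [X_pow_eq_monomial, coeff_mul_monomial', if_neg]
  intro h
  have := h i
  simp only [Finsupp.single_eq_same] at this
  exact absurd (hs i) (by omega)

lemma pow_mem_frobenius_power {t : ℕ} {K : Type*} [Field K] [CharP K 2]
    {f : MvPolynomial (Fin t) K}
    (hf : f ∈ Ideal.span (Set.range fun i => (X i : MvPolynomial (Fin t) K) ^ 2)) (k : ℕ) :
    f ^ 2 ^ k ∈ Ideal.span (Set.range fun i => (X i : MvPolynomial (Fin t) K) ^ 2 ^ (k + 1)) := by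
  have hle : Ideal.span (Set.range fun i => (X i : MvPolynomial (Fin t) K) ^ 2) ≤
      (Ideal.span (Set.range fun i => (X i : MvPolynomial (Fin t) K) ^ 2 ^ (k + 1))).comap
        (iterateFrobenius (MvPolynomial (Fin t) K) 2 k) := by
    rw [Ideal.span_le]
    rintro _ ⟨i, rfl⟩
    rw [SetLike.mem_coe, Ideal.mem_comap, iterateFrobenius_def, ← pow_mul, ← pow_succ']
    exact Ideal.subset_span ⟨i, rfl⟩
  have := hle hf
  rwa [Ideal.mem_comap, iterateFrobenius_def] at this

lemma mem_span_sq {K : Type*} [Field K] (a : K) :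
    (X 1 ^ 2 * X 2 + X 0 * (X 0 + X 2) * (X 0 + C a * X 2) : MvPolynomial (Fin 3) K) ∈
      Ideal.span (Set.range fun i => (X i : MvPolynomial (Fin 3) K) ^ 2) := by
  have h : ∀ i, (X i : MvPolynomial (Fin 3) K) ^ 2 ∈
      Ideal.span (Set.range fun i => (X i : MvPolynomial (Fin 3) K) ^ 2) :=
    fun i => Ideal.subset_span ⟨i, rfl⟩
  have e : (X 1 ^ 2 * X 2 + X 0 * (X 0 + X 2) * (X 0 + C a * X 2) : MvPolynomial (Fin 3) K) =
      X 2 * X 1 ^ 2 + (X 0 + X 2 + C a * X 2) * X 0 ^ 2 + C a * X 0 * X 2 ^ 2 := by ring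
  rw [e]
  exact add_mem (add_mem (Ideal.mul_mem_left _ _ (h 1)) (Ideal.mul_mem_left _ _ (h 0)))
    (Ideal.mul_mem_left _ _ (h 2))

lemma pow_notMem {K : Type*} [Field K] (a : K) (k : ℕ) :
    (X 1 ^ 2 * X 2 + X 0 * (X 0 + X 2) * (X 0 + C a * X 2) : MvPolynomial (Fin 3) K) ^ (2 ^ k - 1) ∉
      Ideal.span (Set.range fun i => (X i : MvPolynomial (Fin 3) K) ^ 2 ^ (k + 1)) := by
  intro h
  -- the substitution `x ↦ 0`
  let φ : MvPolynomial (Fin 3) K →ₐ[K] MvPolynomial (Fin 3) K := aeval ![0, X 1, X 2]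
  have hle : Ideal.span (Set.range fun i => (X i : MvPolynomial (Fin 3) K) ^ 2 ^ (k + 1)) ≤
      (Ideal.span (Set.range fun i => (X i : MvPolynomial (Fin 3) K) ^ 2 ^ (k + 1))).comap φ := by
    rw [Ideal.span_le]
    rintro _ ⟨i, rfl⟩
    rw [SetLike.mem_coe, Ideal.mem_comap]
    fin_cases i
    · simp [φ]
    · have h1 : φ (X 1 ^ 2 ^ (k + 1)) = X 1 ^ 2 ^ (k + 1) := by simp [φ]
      exact Ideal.subset_span ⟨1, h1.symm⟩
    · have h2 : φ (X 2 ^ 2 ^ (k + 1)) = X 2 ^ 2 ^ (k + 1) := by simp [φ]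
      exact Ideal.subset_span ⟨2, h2.symm⟩
  have h' := hle h
  have hφ : φ ((X 1 ^ 2 * X 2 + X 0 * (X 0 + X 2) * (X 0 + C a * X 2)) ^ (2 ^ k - 1)) =
      monomial (Finsupp.single 1 (2 * (2 ^ k - 1)) + Finsupp.single 2 (2 ^ k - 1)) 1 := by
    rw [show (monomial (Finsupp.single (1 : Fin 3) (2 * (2 ^ k - 1)) +
        Finsupp.single 2 (2 ^ k - 1)) (1 : K)) =
        X 1 ^ (2 * (2 ^ k - 1)) * X 2 ^ (2 ^ k - 1) by
      simp [X_pow_eq_monomial, monomial_mul]]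
    simp [φ, mul_pow, pow_mul]
  rw [Ideal.mem_comap, hφ] at h'
  have hk : 0 < 2 ^ k := by positivity
  have h0 := coeff_eq_zero_of_mem_span _ h'
    (Finsupp.single 1 (2 * (2 ^ k - 1)) + Finsupp.single 2 (2 ^ k - 1)) (by
      rw [pow_succ]
      intro i
      fin_cases i <;> simp <;> omega)
  simp at h0

theorem stmt19 {K : Type*} [Field K] [CharP K 2]
    (a : K) (ha0 : a ≠ 0) (ha1 : a ≠ 1)
    (f : MvPolynomial (Fin 3) K)
    (hf : f = X 1 ^ 2 * X 2 + X 0 * (X 0 + X 2) * (X 0 + C a * X 2)) :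
    fpt 2 f = 1 / 2 := by
  have key : ∀ k : ℕ, 0 < k → (((2 ^ k - 1 : ℕ) : ℝ) / ((2 : ℕ) : ℝ) ^ (k + 1)) ∈
      {r : ℝ | ∃ N e : ℕ, 0 < N ∧ 0 < e ∧
        f ^ N ∉ Ideal.span (Set.range fun i => (X i : MvPolynomial (Fin 3) K) ^ 2 ^ e) ∧
        r = (N : ℝ) / ((2 : ℕ) : ℝ) ^ e} := by
    intro k hk
    refine ⟨2 ^ k - 1, k + 1, ?_, k.succ_pos, hf ▸ pow_notMem a k, rfl⟩
    have := Nat.one_lt_two_pow hk.ne'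
    omega
  refine IsLUB.csSup_eq ⟨?_, ?_⟩ ⟨_, key 1 one_pos⟩
  · rintro _ ⟨N, e, -, he, hN, rfl⟩
    obtain ⟨k, rfl⟩ : ∃ k, e = k + 1 := ⟨e - 1, by omega⟩
    have hlt : N < 2 ^ k := by
      by_contra! hge
      apply hN
      rw [← Nat.sub_add_cancel hge, pow_add f]
      exact Ideal.mul_mem_left _ _ (pow_mem_frobenius_power (hf ▸ mem_span_sq a) k)
    have hlt' : (N : ℝ) < 2 ^ k := by exact_mod_cast hlt
    rw [div_le_div_iff₀ (by positivity) (by norm_num), pow_succ]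
    push_cast
    linarith
  · intro b hb
    by_contra! hlt
    obtain ⟨k, hk⟩ := exists_pow_lt_of_lt_one (sub_pos.2 hlt) (y := (1 / 2 : ℝ)) (by norm_num)
    have h1 := hb (key (k + 1) k.succ_pos)
    -- the ratio for `q = 2^(k+1)` is `1/2 - 1/(2q)`
    have h2 : (((2 ^ (k + 1) - 1 : ℕ) : ℝ) / ((2 : ℕ) : ℝ) ^ (k + 1 + 1)) =
        1 / 2 - (1 / 2) ^ k / 4 := by
      rw [Nat.cast_sub Nat.one_le_two_pow, one_div_pow]
      push_cast
      field_simp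
      ring
    rw [h2] at h1
    have : (0 : ℝ) < (1 / 2) ^ k := by positivity
    linarith
end
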